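/- Let n ≥ 2 and let π be a probability density on [0,1] that is strictly positive on (0,1). Suppose the weight vector (w₁,…,wₙ) ∈ (0,1)ⁿ has two equal coordinates, w_i = w_j for some i ≠ j. Then (w₁,…,wₙ) does not minimize the ex ante expected loss 𝓛: there exists another weight vector (w₁′,…,wₙ′) ∈ (0,1)ⁿ with 𝓛(w₁′,…,wₙ′) < 𝓛(w₁,…,wₙ). Consequently any minimizer of 𝓛 over (0,1)ⁿ has pairwise distinct weights. -/

import Mathlib

open MeasureTheory Set

/-- `Hfun f₁ f₂ w = E[X₂² · 1{(1−w)X₂² < wX₁²}]` for independent `X₁ ∼ f₁`, `X₂ ∼ f₂`,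
written as a double integral against the product density. -/
noncomputable def Hfun (f₁ f₂ : ℝ → ℝ) (w : ℝ) : ℝ :=
  ∫ x₁ : ℝ, (∫ x₂ : ℝ, (if (1 - w) * x₂ ^ 2 < w * x₁ ^ 2 then x₂ ^ 2 else 0) * f₂ x₂) * f₁ x₁

/-- `Gfun f₁ f₂ w = E[X₁² · 1{(1−w)X₂² ≥ wX₁²}]` for independent `X₁ ∼ f₁`, `X₂ ∼ f₂`,
written as a double integral against the product density. -/
noncomputable def Gfun (f₁ f₂ : ℝ → ℝ) (w : ℝ) : ℝ :=
  ∫ x₁ : ℝ, (∫ x₂ : ℝ, (if w * x₁ ^ 2 ≤ (1 - w) * x₂ ^ 2 then x₁ ^ 2 else 0) * f₂ x₂) * f₁ x₁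

/-- The receiver's expected loss `L(w ∣ θ) = θ·G(w) + (1−θ)·H(w)`. -/
noncomputable def Lfun (f₁ f₂ : ℝ → ℝ) (w θ : ℝ) : ℝ :=
  θ * Gfun f₁ f₂ w + (1 - θ) * Hfun f₁ f₂ w

/-- A probability density on `ℝ` that is continuous, everywhere positive, symmetric about `0`,
and has a finite second moment. -/
def GoodDensity (f : ℝ → ℝ) : Prop :=
  Continuous f ∧ (∀ x, 0 < f x) ∧ (∀ x, f (-x) = f x) ∧
    (∫ x : ℝ, f x) = 1 ∧ Integrable fun x : ℝ => x ^ 2 * f x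

/-
For `x = (X₁, X₂)` and preference `θ`, the pointwise smallest achievable loss is
`min (θ X₁²) ((1 - θ) X₂²)`, and the threshold rule with weight `w = θ` attains it. A weight
`w ≠ θ` in `[0, 1]` picks the strictly worse alternative on a nonempty open cone, so
`L(θ ∣ θ) < L(w ∣ θ)` as soon as the joint law of `(X₁, X₂)` charges every nonempty open set.

If `w i = w j`, replacing `w j` by an unused weight `t` only adds the competitor `L(t ∣ ·)` to the
minimum. It lowers the minimum strictly at `θ = t`, hence on a neighbourhood of `t` by continuity.
-/

theorem range_update_of_apply_eq {ι α : Type*} [DecidableEq ι] {w : ι → α} {i j : ι}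
    (hij : i ≠ j) (h : w i = w j) (t : α) :
    range (Function.update w j t) = insert t (range w) := by
  ext a
  constructor
  · rintro ⟨k, rfl⟩
    rcases eq_or_ne k j with rfl | hk
    · simp
    · simp [Function.update_of_ne hk]
  · rintro (rfl | ⟨k, rfl⟩)
    · exact ⟨j, Function.update_self ..⟩
    · rcases eq_or_ne k j with rfl | hk
      · exact ⟨i, by rw [Function.update_of_ne hij, h]⟩
      · exact ⟨k, Function.update_of_ne hk ..⟩

theorem iInf_update_of_apply_eq {ι α β : Type*} [Finite ι] [DecidableEq ι]
    [ConditionallyCompleteLattice β] (F : α → β) {w : ι → α} {i j : ι}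
    (hij : i ≠ j) (h : w i = w j) (t : α) :
    ⨅ k, F (Function.update w j t k) = F t ⊓ ⨅ k, F (w k) := by
  have hrange : range (fun k => F (Function.update w j t k)) =
      insert (F t) (range fun k => F (w k)) := by
    rw [← Function.comp_def F, ← Function.comp_def F, range_comp, range_comp,
      range_update_of_apply_eq hij h, image_insert_eq]
  rw [iInf, hrange, csInf_insert (finite_range _).bddBelow ⟨_, mem_range_self i⟩, iInf]

theorem continuous_iInf_of_finite {ι X β : Type*} [Finite ι] [Nonempty ι] [TopologicalSpace X]
    [TopologicalSpace β] [ConditionallyCompleteLattice β] [ContinuousInf β]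
    {f : ι → X → β} (hf : ∀ i, Continuous (f i)) : Continuous fun x => ⨅ i, f i x := by
  have := Fintype.ofFinite ι
  simp_rw [← Finset.inf'_univ_eq_ciInf]
  exact Continuous.finset_inf'_apply _ fun i _ => hf i

theorem integral_lt_integral_of_le_of_lt_on_isOpen {X : Type*} [TopologicalSpace X]
    [MeasurableSpace X] {μ : Measure X} [μ.IsOpenPosMeasure] {f g : X → ℝ}
    (hf : Integrable f μ) (hg : Integrable g μ) (hle : ∀ x, f x ≤ g x)
    {U : Set X} (hU : IsOpen U) (hne : U.Nonempty) (hlt : ∀ x ∈ U, f x < g x) :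
    ∫ x, f x ∂μ < ∫ x, g x ∂μ := by
  rw [← sub_pos, ← integral_sub hg hf,
    integral_pos_iff_support_of_nonneg (fun x => sub_nonneg.2 (hle x)) (hg.sub hf)]
  exact (hU.measure_pos μ hne).trans_le
    (measure_mono fun x hx => (sub_pos.2 (hlt x hx)).ne')

theorem intervalIntegral_mul_lt_of_le_of_lt {a b t : ℝ} {f g π : ℝ → ℝ}
    (hf : Continuous f) (hg : Continuous g) (hπ : IntervalIntegrable π volume a b)
    (hπ_pos : ∀ x ∈ Ioo a b, 0 < π x) (hle : ∀ x, f x ≤ g x)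
    (ht : t ∈ Ioo a b) (hlt : f t < g t) :
    ∫ x in a..b, f x * π x < ∫ x in a..b, g x * π x := by
  refine intervalIntegral.integral_lt_integral_of_ae_le_of_measure_setOfPred_lt_ne_zero
    (ht.1.trans ht.2).le (hπ.continuousOn_mul hf.continuousOn)
    (hπ.continuousOn_mul hg.continuousOn) ?_ ?_
  · rw [← restrict_Ioo_eq_restrict_Ioc]
    filter_upwards [ae_restrict_mem measurableSet_Ioo] with x hx
    exact mul_le_mul_of_nonneg_right (hle x) (hπ_pos x hx).le
  · have hopen : IsOpen ({x | f x < g x} ∩ Ioo a b) := (isOpen_lt hf hg).inter isOpen_Ioo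
    have hsub : {x | f x < g x} ∩ Ioo a b ⊆ {x | f x * π x < g x * π x} ∩ Ioo a b :=
      fun x hx => ⟨mul_lt_mul_of_pos_right hx.1 (hπ_pos x hx.2), hx.2⟩
    rw [← restrict_Ioo_eq_restrict_Ioc, Measure.restrict_apply' measurableSet_Ioo]
    exact ((hopen.measure_pos volume ⟨t, hlt, ht⟩).trans_le (measure_mono hsub)).ne'

theorem exists_intervalIntegral_iInf_mul_lt {ι : Type*} [Finite ι] {a b : ℝ}
    {L : ℝ → ℝ → ℝ} (hL : ∀ w, Continuous (L w))
    (hL_lt : ∀ θ ∈ Ioo a b, ∀ w ∈ Ioo a b, w ≠ θ → L θ θ < L w θ)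
    {π : ℝ → ℝ} (hπ : IntervalIntegrable π volume a b) (hπ_pos : ∀ x ∈ Ioo a b, 0 < π x)
    {w : ι → ℝ} (hw : ∀ k, w k ∈ Ioo a b) (hw_inj : ¬ Function.Injective w) :
    ∃ w' : ι → ℝ, (∀ k, w' k ∈ Ioo a b) ∧
      ∫ θ in a..b, (⨅ k, L (w' k) θ) * π θ < ∫ θ in a..b, (⨅ k, L (w k) θ) * π θ := by
  classical
  obtain ⟨i, j, heq, hij⟩ := Function.not_injective_iff.1 hw_inj
  have : Nonempty ι := ⟨i⟩
  obtain ⟨t, ht, htw⟩ : ∃ t ∈ Ioo a b, t ∉ range w :=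
    (Ioo_infinite ((hw i).1.trans (hw i).2)).exists_notMem_finite (finite_range w)
  have hmin (θ : ℝ) : ⨅ k, L (Function.update w j t k) θ = L t θ ⊓ ⨅ k, L (w k) θ :=
    iInf_update_of_apply_eq (fun v => L v θ) hij heq t
  have hlt : L t t < ⨅ k, L (w k) t := by
    obtain ⟨k, hk⟩ := exists_eq_ciInf_of_finite (f := fun k => L (w k) t)
    exact hk ▸ hL_lt t ht (w k) (hw k) fun h => htw ⟨k, h⟩
  refine ⟨Function.update w j t, fun k => ?_, ?_⟩
  · rcases eq_or_ne k j with rfl | hk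
    · rwa [Function.update_self]
    · rw [Function.update_of_ne hk]; exact hw k
  · refine intervalIntegral_mul_lt_of_le_of_lt (continuous_iInf_of_finite fun _ => hL _)
      (continuous_iInf_of_finite fun _ => hL _) hπ hπ_pos (fun θ => ?_) ht ?_
    · exact (hmin θ).trans_le inf_le_right
    · exact ((hmin t).trans_le inf_le_left).trans_lt hlt

/-- The quantity `w X₁² - (1 - w) X₂²` whose sign determines the decision under weight `w`,
for `x = (X₁, X₂)`. -/
def weightGap (w : ℝ) (x : ℝ × ℝ) : ℝ :=
  w * x.1 ^ 2 - (1 - w) * x.2 ^ 2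

/-- The loss at `x = (X₁, X₂)` of a receiver with preference `θ` under weight `w`: she
suffers `(1 - θ) X₂²` if the first coordinate wins the weighted comparison and `θ X₁²` otherwise,
ties included. -/
noncomputable def pointLoss (w θ : ℝ) (x : ℝ × ℝ) : ℝ :=
  if 0 < weightGap w x then (1 - θ) * x.2 ^ 2 else θ * x.1 ^ 2

/-- The receiver's expected loss `L(w ∣ θ)` when `(X₁, X₂)` has joint law `μ`; the coordinates
need not be independent. -/
noncomputable def receiverLoss (μ : Measure (ℝ × ℝ)) (w θ : ℝ) : ℝ :=
  ∫ x, pointLoss w θ x ∂μ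

/-- The ex ante expected loss `𝓛(w)` when `(X₁, X₂)` has joint law `μ` and the receiver's
preference has density `π` on `[0, 1]`. -/
noncomputable def exAnteLoss {ι : Type*} (μ : Measure (ℝ × ℝ)) (π : ℝ → ℝ) (w : ι → ℝ) : ℝ :=
  ∫ θ in (0 : ℝ)..1, (⨅ i, receiverLoss μ (w i) θ) * π θ

theorem continuous_weightGap (w : ℝ) : Continuous (weightGap w) := by
  unfold weightGap; fun_prop

theorem pointLoss_eq_sub (w θ : ℝ) (x : ℝ × ℝ) :
    pointLoss w θ x = θ * x.1 ^ 2 - if 0 < weightGap w x then weightGap θ x else 0 := by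
  unfold pointLoss
  split_ifs
  · rw [weightGap]; ring
  · rw [sub_zero]

theorem pointLoss_eq_combination (w θ : ℝ) (x : ℝ × ℝ) :
    pointLoss w θ x = θ * pointLoss w 1 x + (1 - θ) * pointLoss w 0 x := by
  unfold pointLoss
  split_ifs <;> ring

theorem pointLoss_self_le (w θ : ℝ) (x : ℝ × ℝ) : pointLoss θ θ x ≤ pointLoss w θ x := by
  rw [pointLoss_eq_sub, pointLoss_eq_sub]
  split_ifs <;> linarith

theorem pointLoss_self_lt {w θ : ℝ} {x : ℝ × ℝ} (h : weightGap w x * weightGap θ x < 0) :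
    pointLoss θ θ x < pointLoss w θ x := by
  rw [pointLoss_eq_sub, pointLoss_eq_sub]
  rcases mul_neg_iff.1 h with ⟨hw, hθ⟩ | ⟨hw, hθ⟩
  · rw [if_neg hθ.not_gt, if_pos hw]; linarith
  · rw [if_pos hθ, if_neg hw.not_gt]; linarith

theorem exists_weightGap_mul_neg {w θ : ℝ} (hw : w ∈ Icc 0 1) (hθ : θ ∈ Icc 0 1)
    (hne : w ≠ θ) : ∃ x : ℝ × ℝ, weightGap w x * weightGap θ x < 0 := by
  obtain ⟨m, hm⟩ : ∃ m, m = (w + θ) / 2 := ⟨_, rfl⟩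
  have hm0 : 0 ≤ m := by linarith [hw.1, hθ.1]
  have hm1 : 0 ≤ 1 - m := by linarith [hw.2, hθ.2]
  have hgap (v : ℝ) : weightGap v (√(1 - m), √m) = v - m := by
    simp only [weightGap, Real.sq_sqrt hm0, Real.sq_sqrt hm1]; ring
  refine ⟨(√(1 - m), √m), ?_⟩
  calc weightGap w (√(1 - m), √m) * weightGap θ (√(1 - m), √m)
      = -((w - θ) ^ 2 / 4) := by rw [hgap, hgap, hm]; ring
    _ < 0 := by have := sq_pos_of_ne_zero (sub_ne_zero.2 hne); linarith

section JointLaw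

variable {μ : Measure (ℝ × ℝ)} (hμ₁ : Integrable (fun x => x.1 ^ 2) μ)
  (hμ₂ : Integrable (fun x => x.2 ^ 2) μ)

include hμ₁ hμ₂

theorem integrable_pointLoss (w θ : ℝ) : Integrable (pointLoss w θ) μ := by
  have hS : MeasurableSet {x | 0 < weightGap w x} :=
    measurableSet_lt measurable_const (continuous_weightGap w).measurable
  exact Integrable.piecewise (s := {x | 0 < weightGap w x}) hS (hμ₂.const_mul (1 - θ)).integrableOn
    (hμ₁.const_mul θ).integrableOn

theorem receiverLoss_eq_combination (w θ : ℝ) :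
    receiverLoss μ w θ = θ * receiverLoss μ w 1 + (1 - θ) * receiverLoss μ w 0 := by
  have hint (θ : ℝ) := integrable_pointLoss hμ₁ hμ₂ w θ
  simp_rw [receiverLoss, pointLoss_eq_combination w θ]
  rw [integral_add ((hint 1).const_mul θ) ((hint 0).const_mul (1 - θ)), integral_const_mul,
    integral_const_mul]

theorem continuous_receiverLoss (w : ℝ) : Continuous (receiverLoss μ w) := by
  rw [funext (receiverLoss_eq_combination hμ₁ hμ₂ w)]
  fun_prop

theorem receiverLoss_self_lt [μ.IsOpenPosMeasure] {w θ : ℝ} (hw : w ∈ Icc 0 1)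
    (hθ : θ ∈ Icc 0 1) (hne : w ≠ θ) : receiverLoss μ θ θ < receiverLoss μ w θ :=
  integral_lt_integral_of_le_of_lt_on_isOpen (integrable_pointLoss hμ₁ hμ₂ θ θ)
    (integrable_pointLoss hμ₁ hμ₂ w θ) (pointLoss_self_le w θ)
    (isOpen_lt ((continuous_weightGap w).mul (continuous_weightGap θ)) continuous_const)
    (exists_weightGap_mul_neg hw hθ hne) fun _ => pointLoss_self_lt

theorem exists_exAnteLoss_lt_of_not_injective [μ.IsOpenPosMeasure] {ι : Type*} [Finite ι]
    {π : ℝ → ℝ} (hπ : IntervalIntegrable π volume 0 1) (hπ_pos : ∀ x ∈ Ioo (0 : ℝ) 1, 0 < π x)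
    {w : ι → ℝ} (hw : ∀ k, w k ∈ Ioo (0 : ℝ) 1) (hw_inj : ¬ Function.Injective w) :
    ∃ w' : ι → ℝ, (∀ k, w' k ∈ Ioo (0 : ℝ) 1) ∧ exAnteLoss μ π w' < exAnteLoss μ π w :=
  exists_intervalIntegral_iInf_mul_lt (continuous_receiverLoss hμ₁ hμ₂)
    (fun _ hθ _ hv => receiverLoss_self_lt hμ₁ hμ₂ (Ioo_subset_Icc_self hv)
      (Ioo_subset_Icc_self hθ)) hπ hπ_pos hw hw_inj

end JointLaw

section WithDensity

variable {α : Type*} [MeasurableSpace α] {μ : Measure α} {f : α → ℝ}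

theorem integral_withDensity_ofReal (hf : Measurable f) (hf_nonneg : ∀ x, 0 ≤ f x) (g : α → ℝ) :
    ∫ x, g x ∂μ.withDensity (fun x => ENNReal.ofReal (f x)) = ∫ x, g x * f x ∂μ := by
  rw [integral_withDensity_eq_integral_toReal_smul hf.ennreal_ofReal (by simp)]
  simp only [ENNReal.toReal_ofReal (hf_nonneg _), smul_eq_mul, mul_comm]

theorem integrable_withDensity_ofReal_iff (hf : Measurable f) (hf_nonneg : ∀ x, 0 ≤ f x)
    {g : α → ℝ} : Integrable g (μ.withDensity fun x => ENNReal.ofReal (f x)) ↔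
      Integrable (fun x => g x * f x) μ := by
  rw [integrable_withDensity_iff hf.ennreal_ofReal (by simp)]
  simp only [ENNReal.toReal_ofReal (hf_nonneg _)]

theorem isOpenPosMeasure_withDensity_ofReal [TopologicalSpace α] [μ.IsOpenPosMeasure]
    (hf : Measurable f) (hf_pos : ∀ x, 0 < f x) :
    (μ.withDensity fun x => ENNReal.ofReal (f x)).IsOpenPosMeasure :=
  (withDensity_absolutelyContinuous' hf.ennreal_ofReal.aemeasurable <|
    .of_forall fun x => (ENNReal.ofReal_pos.2 (hf_pos x)).ne').isOpenPosMeasure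

end WithDensity

/-- The measure on `ℝ` with Lebesgue density `f`, negative values of `f` being read as `0`. -/
noncomputable def densityLaw (f : ℝ → ℝ) : Measure ℝ :=
  volume.withDensity fun x => ENNReal.ofReal (f x)

instance (f : ℝ → ℝ) : SFinite (densityLaw f) := by
  unfold densityLaw; infer_instance

namespace GoodDensity

variable {f : ℝ → ℝ} (hf : GoodDensity f)

include hf

theorem measurable : Measurable f := hf.1.measurable

theorem nonneg (x : ℝ) : 0 ≤ f x := (hf.2.1 x).le

theorem isOpenPosMeasure_densityLaw : (densityLaw f).IsOpenPosMeasure :=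
  isOpenPosMeasure_withDensity_ofReal hf.measurable hf.2.1

theorem isFiniteMeasure_densityLaw : IsFiniteMeasure (densityLaw f) :=
  isFiniteMeasure_withDensity_ofReal (integrable_of_integral_eq_one hf.2.2.2.1).2

theorem integrable_sq_densityLaw : Integrable (fun x => x ^ 2) (densityLaw f) :=
  (integrable_withDensity_ofReal_iff hf.measurable hf.nonneg).2 hf.2.2.2.2

theorem integral_densityLaw (g : ℝ → ℝ) : ∫ x, g x ∂densityLaw f = ∫ x, g x * f x :=
  integral_withDensity_ofReal hf.measurable hf.nonneg g

end GoodDensity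

/-- The joint law of independent `X₁ ∼ f₁` and `X₂ ∼ f₂`. -/
noncomputable def jointLaw (f₁ f₂ : ℝ → ℝ) : Measure (ℝ × ℝ) :=
  (densityLaw f₁).prod (densityLaw f₂)

section JointDensity

variable {f₁ f₂ : ℝ → ℝ} (hf₁ : GoodDensity f₁) (hf₂ : GoodDensity f₂)

include hf₁ hf₂

theorem isOpenPosMeasure_jointLaw : (jointLaw f₁ f₂).IsOpenPosMeasure := by
  have := hf₁.isOpenPosMeasure_densityLaw
  have := hf₂.isOpenPosMeasure_densityLaw
  unfold jointLaw; infer_instance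

theorem integrable_fst_sq_jointLaw : Integrable (fun x => x.1 ^ 2) (jointLaw f₁ f₂) :=
  have := hf₂.isFiniteMeasure_densityLaw
  hf₁.integrable_sq_densityLaw.comp_fst _

theorem integrable_snd_sq_jointLaw : Integrable (fun x => x.2 ^ 2) (jointLaw f₁ f₂) :=
  have := hf₁.isFiniteMeasure_densityLaw
  hf₂.integrable_sq_densityLaw.comp_snd _

theorem integral_jointLaw {g : ℝ × ℝ → ℝ} (hg : Integrable g (jointLaw f₁ f₂)) :
    ∫ x, g x ∂jointLaw f₁ f₂ = ∫ x₁, (∫ x₂, g (x₁, x₂) * f₂ x₂) * f₁ x₁ := by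
  rw [jointLaw, integral_prod g hg, hf₁.integral_densityLaw]
  simp only [hf₂.integral_densityLaw]

theorem receiverLoss_jointLaw (w θ : ℝ) : receiverLoss (jointLaw f₁ f₂) w θ =
    ∫ x₁, (∫ x₂, pointLoss w θ (x₁, x₂) * f₂ x₂) * f₁ x₁ :=
  integral_jointLaw hf₁ hf₂ <| integrable_pointLoss (integrable_fst_sq_jointLaw hf₁ hf₂)
    (integrable_snd_sq_jointLaw hf₁ hf₂) w θ

theorem Lfun_eq_receiverLoss (w θ : ℝ) : Lfun f₁ f₂ w θ = receiverLoss (jointLaw f₁ f₂) w θ := by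
  have hG : Gfun f₁ f₂ w = receiverLoss (jointLaw f₁ f₂) w 1 := by
    rw [receiverLoss_jointLaw hf₁ hf₂, Gfun]
    simp only [pointLoss, weightGap, sub_pos, ← not_lt, ite_not, sub_self, zero_mul, one_mul]
  have hH : Hfun f₁ f₂ w = receiverLoss (jointLaw f₁ f₂) w 0 := by
    rw [receiverLoss_jointLaw hf₁ hf₂, Hfun]
    simp only [pointLoss, weightGap, sub_pos, sub_zero, zero_mul, one_mul]
  rw [Lfun, hG, hH, ← receiverLoss_eq_combination (integrable_fst_sq_jointLaw hf₁ hf₂)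
    (integrable_snd_sq_jointLaw hf₁ hf₂)]

theorem exAnteLoss_jointLaw {ι : Type*} (π : ℝ → ℝ) (w : ι → ℝ) :
    exAnteLoss (jointLaw f₁ f₂) π w =
      ∫ θ in (0 : ℝ)..1, (⨅ i, Lfun f₁ f₂ (w i) θ) * π θ := by
  simp only [exAnteLoss, Lfun_eq_receiverLoss hf₁ hf₂]

end JointDensity

theorem stmt15_general {μ : Measure (ℝ × ℝ)} [μ.IsOpenPosMeasure]
    (hμ₁ : Integrable (fun x => x.1 ^ 2) μ) (hμ₂ : Integrable (fun x => x.2 ^ 2) μ)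
    {ι : Type*} [Finite ι] {π : ℝ → ℝ} (hπ : IntervalIntegrable π volume 0 1)
    (hπ_pos : ∀ x ∈ Ioo (0 : ℝ) 1, 0 < π x)
    {w : ι → ℝ} (hw : ∀ k, w k ∈ Ioo (0 : ℝ) 1) {i j : ι} (hij : i ≠ j) (heq : w i = w j) :
    (∃ w' : ι → ℝ, (∀ k, w' k ∈ Ioo (0 : ℝ) 1) ∧ exAnteLoss μ π w' < exAnteLoss μ π w) ∧
    (∀ v : ι → ℝ, (∀ k, v k ∈ Ioo (0 : ℝ) 1) →
      (∀ u : ι → ℝ, (∀ k, u k ∈ Ioo (0 : ℝ) 1) → exAnteLoss μ π v ≤ exAnteLoss μ π u) →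
      Function.Injective v) := by
  refine ⟨exists_exAnteLoss_lt_of_not_injective hμ₁ hμ₂ hπ hπ_pos hw fun hinj => hij (hinj heq),
    fun v hv hmin => by_contra fun hinj => ?_⟩
  obtain ⟨u, hu, hlt⟩ := exists_exAnteLoss_lt_of_not_injective hμ₁ hμ₂ hπ hπ_pos hv hinj
  exact (hmin u hu).not_gt hlt

/-- Let `n ≥ 2` and let `π` be a probability density on `[0,1]`
strictly positive on `(0,1)`. If the weight vector `(w₁,…,wₙ) ∈ (0,1)ⁿ` has two equal
coordinates, then it does not minimize the ex ante expected loss `𝓛`: some other weight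
vector in `(0,1)ⁿ` achieves strictly smaller `𝓛`. Consequently any minimizer of `𝓛`
over `(0,1)ⁿ` has pairwise distinct weights. -/
theorem stmt15 (f₁ f₂ : ℝ → ℝ) (hf₁ : GoodDensity f₁) (hf₂ : GoodDensity f₂)
    (n : ℕ) (hn : 2 ≤ n)
    (π : ℝ → ℝ) (hπ_meas : Measurable π) (hπ_nonneg : ∀ x, 0 ≤ π x)
    (hπ_total : (∫ θ in (0 : ℝ)..1, π θ) = 1)
    (hπ_pos : ∀ x ∈ Set.Ioo (0 : ℝ) 1, 0 < π x)
    (𝓛 : (Fin n → ℝ) → ℝ)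
    (h𝓛 : ∀ v : Fin n → ℝ, 𝓛 v = ∫ θ in (0 : ℝ)..1, (⨅ i, Lfun f₁ f₂ (v i) θ) * π θ)
    (w : Fin n → ℝ) (hw : ∀ i, w i ∈ Set.Ioo (0 : ℝ) 1)
    (i j : Fin n) (hij : i ≠ j) (heq : w i = w j) :
    (∃ w' : Fin n → ℝ, (∀ k, w' k ∈ Set.Ioo (0 : ℝ) 1) ∧ 𝓛 w' < 𝓛 w) ∧
    (∀ v : Fin n → ℝ, (∀ k, v k ∈ Set.Ioo (0 : ℝ) 1) →
      (∀ u : Fin n → ℝ, (∀ k, u k ∈ Set.Ioo (0 : ℝ) 1) → 𝓛 v ≤ 𝓛 u) →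
      Function.Injective v) := by
  have := isOpenPosMeasure_jointLaw hf₁ hf₂
  simp only [h𝓛, ← exAnteLoss_jointLaw hf₁ hf₂]
  exact stmt15_general (integrable_fst_sq_jointLaw hf₁ hf₂) (integrable_snd_sq_jointLaw hf₁ hf₂)
    (intervalIntegral.intervalIntegrable_of_integral_ne_zero (by simp [hπ_total])) hπ_pos hw hij heq
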